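/- arXiv:2101.11094 — 4 statements merged into one kernel-verified Lean document; each statement's English description precedes it below -/
import Mathlib

section
/- Let n be a positive integer, let Λ be a lattice of full rank in ℝ^n with successive minima λ_1 ≤ … ≤ λ_n, let P ∈ [0,∞)^n and B_P := ∏_{i=1}^n [−P_i, P_i]. Then there exists a constant c₀ > 0 depending only on n such that #(Λ ∩ B_P) ≤ c₀ (1 + Σ_{s=1}^n 𝒱_s(B_P)/(λ_1⋯λ_s)), where 𝒱_s(B_P) := max{P_{i_1}⋯P_{i_s} : 1 ≤ i_1 < … < i_s ≤ n}. -/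
/-- The Euclidean norm of a vector in `ι → ℝ`. -/
noncomputable def enorm2 {ι : Type*} [Fintype ι] (v : ι → ℝ) : ℝ := Real.sqrt (∑ i, v i ^ 2)

/-- The `s`-th successive minimum of a set `Λ ⊆ ℝ^ι` (with respect to the Euclidean norm):
the infimum of all `r > 0` such that the closed Euclidean ball of radius `r` centred at `0`
contains `s` linearly independent vectors of `Λ`. -/
noncomputable def succMin {ι : Type*} [Fintype ι] (Λ : Set (ι → ℝ)) (s : ℕ) : ℝ :=
  sInf {r : ℝ | 0 < r ∧ ∃ w : Fin s → ι → ℝ,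
    (∀ k, w k ∈ Λ) ∧ LinearIndependent ℝ w ∧ ∀ k, enorm2 (w k) ≤ r}

/-!
Let `μ i` be the successive minima of the lattice `L` for the sup norm. If a finite set of
points of `L` has diameter at most `R`, its differences lie in the group `Γ` generated by the
vectors of `L` of norm at most `R`. Some `1 / 2 ^ rank Γ` of the points agree modulo `2 Γ`; after a
translation they can be halved inside `L`, which halves the diameter. As `μ i ≤ R` for
`i ≤ rank Γ`, iterating bounds the number of points by `∏ max(1, 2 R / μ i)`. Covering the box by
cubes of side `ρ` bounds the number of its lattice points by a constant times
`∏ max(1, ρ / μ i) * ∏ max(1, P i / ρ)`. Choose `ρ` so that, for some `s`, it separates the `s`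
smallest `μ i` from the others and the `s` largest `P i` from the others: the powers of `ρ` cancel,
and a single term of the claimed sum remains. Euclidean and sup norm successive minima differ by a
bounded factor.
-/

open Finset Metric Module

theorem exists_pos_forall_norm_lt_eq_zero {E : Type*} [NormedAddCommGroup E] (L : Submodule ℤ E)
    [DiscreteTopology L] : ∃ ε > 0, ∀ x ∈ L, ‖x‖ < ε → x = 0 := by
  obtain ⟨ε, hε, h⟩ := isOpen_singleton_iff.1 (isOpen_discrete ({0} : Set L))
  exact ⟨ε, hε, fun x hx hlt => congrArg Subtype.val (h ⟨x, hx⟩ (by simpa using hlt))⟩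

theorem exists_subset_card_le_pow_finrank_mul_card {α M : Type*} [AddCommGroup M]
    [Free ℤ M] [Module.Finite ℤ M] (q : ℕ) [NeZero q] (A : Finset α) (f : α → M) :
    ∃ B ⊆ A, #A ≤ q ^ finrank ℤ M * #B ∧ ∀ a ∈ B, ∀ b ∈ B, ∃ m, f a - f b = q • m := by
  classical
  have := Fintype.ofFinite (ModN M q)
  obtain ⟨y, -, hy⟩ := exists_max_image univ (fun y => #{a ∈ A | ModN.mkQ q (f a) = y})
    univ_nonempty
  refine ⟨{a ∈ A | ModN.mkQ q (f a) = y}, filter_subset _ _, ?_, fun a ha b hb => ?_⟩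
  · rw [← ModN.natCard_eq, Nat.card_eq_fintype_card, mul_comm]
    exact card_le_mul_card_image_of_maps_to (fun _ _ => mem_univ _) _ hy
  · have hab : ModN.mkQ q (f a) = ModN.mkQ q (f b) :=
      (mem_filter.1 ha).2.trans (mem_filter.1 hb).2.symm
    obtain ⟨m, hm⟩ := (Submodule.Quotient.eq _).1 hab
    exact ⟨m, by simpa using hm.symm⟩

theorem exists_subset_card_le_pow_finrank_mul_card_of_sub_mem {M : Type*} [AddCommGroup M]
    (q : ℕ) [NeZero q] (Γ : Submodule ℤ M) [Free ℤ Γ] [Module.Finite ℤ Γ] {A : Finset M}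
    (hA : ∀ a ∈ A, ∀ b ∈ A, a - b ∈ Γ) :
    ∃ B ⊆ A, #A ≤ q ^ finrank ℤ Γ * #B ∧ ∀ a ∈ B, ∀ b ∈ B, ∃ γ ∈ Γ, a - b = q • γ := by
  rcases A.eq_empty_or_nonempty with rfl | ⟨a₀, ha₀⟩
  · exact ⟨∅, by simp⟩
  have hcoset : ∀ a, ∃ γ : Γ, a ∈ A → (γ : M) = a - a₀ := fun a => by
    by_cases ha : a ∈ A
    · exact ⟨⟨a - a₀, hA a ha a₀ ha₀⟩, fun _ => rfl⟩
    · exact ⟨0, fun h => absurd h ha⟩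
  choose f hf using hcoset
  obtain ⟨B, hBA, hcard, hB⟩ := exists_subset_card_le_pow_finrank_mul_card q A f
  refine ⟨B, hBA, hcard, fun a ha b hb => ?_⟩
  obtain ⟨γ, hγ⟩ := hB a ha b hb
  exact ⟨γ, γ.2, by simpa [hf _ (hBA ha), hf _ (hBA hb)] using congrArg Subtype.val hγ⟩

theorem exists_diam_le_half_card_le_two_pow_finrank_mul_card {E : Type*} [NormedAddCommGroup E]
    [NormedSpace ℝ E] [FiniteDimensional ℝ E] (L : Submodule ℤ E) [DiscreteTopology L]
    {A : Finset E} {R : ℝ} (hAL : (A : Set E) ⊆ L) (hAR : diam (A : Set E) ≤ R) :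
    ∃ B : Finset E, (B : Set E) ⊆ L ∧ diam (B : Set E) ≤ R / 2 ∧
      #A ≤ 2 ^ Set.finrank ℝ ((L : Set E) ∩ closedBall 0 R) * #B := by
  classical
  have hR : 0 ≤ R / 2 := div_nonneg (diam_nonneg.trans hAR) zero_le_two
  have hdist {a b : E} (ha : a ∈ A) (hb : b ∈ A) : dist a b ≤ R :=
    (dist_le_diam_of_mem A.finite_toSet.isBounded ha hb).trans hAR
  let Γ := Submodule.span ℤ ((L : Set E) ∩ closedBall 0 R)
  have hΓL : Γ ≤ L := Submodule.span_le.2 Set.inter_subset_left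
  have hΓ : DiscreteTopology Γ := .of_subset (s := (L : Set E)) inferInstance hΓL
  obtain ⟨B, hBA, hcard, hB⟩ := exists_subset_card_le_pow_finrank_mul_card_of_sub_mem 2 Γ
    fun a ha b hb => Submodule.subset_span
      ⟨L.sub_mem (hAL ha) (hAL hb), by simpa [← dist_eq_norm] using hdist ha hb⟩
  have hfinrank : finrank ℤ Γ = Set.finrank ℝ ((L : Set E) ∩ closedBall 0 R) :=
    (Real.finrank_eq_int_finrank_of_discrete hΓ).symm
  rw [hfinrank] at hcard
  rcases B.eq_empty_or_nonempty with rfl | ⟨b₀, hb₀⟩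
  · exact ⟨∅, by simp, by simpa using hR, hcard⟩
  have hinj : Function.Injective fun b : E => (2⁻¹ : ℝ) • (b - b₀) :=
    (smul_right_injective E (by simp)).comp sub_left_injective
  refine ⟨B.image fun b => (2⁻¹ : ℝ) • (b - b₀), ?_, ?_, by rwa [card_image_of_injective _ hinj]⟩
  · rw [coe_image]
    rintro _ ⟨b, hb, rfl⟩
    obtain ⟨γ, hγ, hbγ⟩ := hB b hb b₀ hb₀
    simpa [hbγ, two_nsmul, ← two_smul ℝ γ] using hΓL hγ
  · refine diam_le_of_forall_dist_le hR ?_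
    rw [coe_image]
    rintro _ ⟨a, ha, rfl⟩ _ ⟨b, hb, rfl⟩
    rw [dist_smul₀, dist_sub_right, norm_inv, Real.norm_ofNat, inv_mul_eq_div]
    exact div_le_div_of_nonneg_right (hdist (hBA ha) (hBA hb)) zero_le_two

theorem le_setFinrank_iff_exists_linearIndependent {K V : Type*} [DivisionRing K]
    [AddCommGroup V] [Module K V] [FiniteDimensional K V] {X : Set V} {s : ℕ} :
    s ≤ Set.finrank K X ↔ ∃ w : Fin s → V, (∀ k, w k ∈ X) ∧ LinearIndependent K w := by
  constructor
  · intro hs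
    obtain ⟨f, hfX, -, hf⟩ := Submodule.exists_fun_fin_finrank_span_eq K X
    exact ⟨f ∘ Fin.castLE hs, fun k => hfX _, hf.comp _ (Fin.castLE_injective hs)⟩
  · rintro ⟨w, hwX, hw⟩
    calc s = Set.finrank K (Set.range w) := by
          rw [Set.finrank, finrank_span_eq_card hw, Fintype.card_fin]
      _ ≤ Set.finrank K X := Set.finrank_mono (Set.range_subset_iff.2 hwX)

/-- The `s`-th successive minimum of a subset `Λ` of a finite-dimensional normed space, with respect
to the norm of that space. That a ball contains `s` linearly independent vectors of `Λ` is expressed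
as a lower bound on the dimension of the span of its intersection with `Λ`; for `s` larger than
the dimension of the span of `Λ` the value is `sInf ∅ = 0`. -/
noncomputable def successiveMin {E : Type*} [NormedAddCommGroup E] [NormedSpace ℝ E] (Λ : Set E)
    (s : ℕ) : ℝ :=
  sInf {r : ℝ | 0 < r ∧ s ≤ Set.finrank ℝ (Λ ∩ closedBall 0 r)}

section SuccessiveMin
variable {E : Type*} [NormedAddCommGroup E] [NormedSpace ℝ E] {Λ : Set E} {s t : ℕ} {r : ℝ}

theorem successiveMin_le (hr : 0 < r) (hs : s ≤ Set.finrank ℝ (Λ ∩ closedBall 0 r)) :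
    successiveMin Λ s ≤ r :=
  csInf_le ⟨0, fun _ hr => hr.1.le⟩ ⟨hr, hs⟩

variable [FiniteDimensional ℝ E]

theorem exists_pos_le_finrank_inter_closedBall (hs : s ≤ Set.finrank ℝ Λ) :
    ∃ r > 0, s ≤ Set.finrank ℝ (Λ ∩ closedBall 0 r) := by
  obtain ⟨w, hwΛ, hw⟩ := le_setFinrank_iff_exists_linearIndependent.1 hs
  obtain ⟨r, hr, hwr⟩ := (Set.finite_range w).isBounded.exists_pos_norm_le
  exact ⟨r, hr, le_setFinrank_iff_exists_linearIndependent.2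
    ⟨w, fun k => ⟨hwΛ k, mem_closedBall_zero_iff.2 (hwr _ ⟨k, rfl⟩)⟩, hw⟩⟩

theorem successiveMin_le_successiveMin (hst : s ≤ t) (ht : t ≤ Set.finrank ℝ Λ) :
    successiveMin Λ s ≤ successiveMin Λ t :=
  csInf_le_csInf ⟨0, fun _ hr => hr.1.le⟩ (exists_pos_le_finrank_inter_closedBall ht)
    fun _ hr => ⟨hr.1, hst.trans hr.2⟩

theorem successiveMin_pos (L : Submodule ℤ E) [DiscreteTopology L] (hs₀ : s ≠ 0)
    (hs : s ≤ Set.finrank ℝ (L : Set E)) : 0 < successiveMin (L : Set E) s := by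
  obtain ⟨ε, hε, hεL⟩ := exists_pos_forall_norm_lt_eq_zero L
  refine hε.trans_le (le_csInf (exists_pos_le_finrank_inter_closedBall hs) ?_)
  rintro r ⟨-, hr⟩
  obtain ⟨w, hwL, hw⟩ := le_setFinrank_iff_exists_linearIndependent.1 hr
  let k : Fin s := ⟨0, Nat.pos_of_ne_zero hs₀⟩
  by_contra! hrε
  exact hw.ne_zero k
    (hεL _ (hwL k).1 ((mem_closedBall_zero_iff.1 (hwL k).2).trans_lt hrε))

theorem two_pow_finrank_inter_closedBall_mul_prod_le (L : Submodule ℤ E) [DiscreteTopology L]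
    (hr : 0 < r) :
    2 ^ Set.finrank ℝ ((L : Set E) ∩ closedBall 0 r) *
        ∏ i ∈ Icc 1 (Set.finrank ℝ (L : Set E)), max 1 (r / successiveMin (L : Set E) i) ≤
      ∏ i ∈ Icc 1 (Set.finrank ℝ (L : Set E)), max 1 (2 * r / successiveMin (L : Set E) i) := by
  set k := Set.finrank ℝ ((L : Set E) ∩ closedBall 0 r)
  set d := Set.finrank ℝ (L : Set E)
  have hkd : k ≤ d := Set.finrank_mono Set.inter_subset_left
  have hpow : (2 : ℝ) ^ k = ∏ i ∈ Icc 1 d, if i ≤ k then 2 else 1 := by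
    have hfilter : {i ∈ Icc 1 d | i ≤ k} = Icc 1 k := by
      ext i; simp only [mem_filter, mem_Icc]; lia
    rw [← prod_filter, hfilter, prod_const, Nat.card_Icc, Nat.add_sub_cancel]
  rw [hpow, ← prod_mul_distrib]
  refine prod_le_prod (fun i _ => by positivity) fun i hi => ?_
  obtain ⟨hi₁, hid⟩ := mem_Icc.1 hi
  have hpos : 0 < successiveMin (L : Set E) i := successiveMin_pos L (by lia) hid
  rw [mul_div_assoc]
  split_ifs with hik
  · have hle : 1 ≤ r / successiveMin (L : Set E) i :=
      (one_le_div hpos).2 (successiveMin_le hr hik)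
    rw [max_eq_right hle]
    exact le_max_right _ _
  · rw [one_mul]
    exact max_le_max le_rfl (le_mul_of_one_le_left (by positivity) one_le_two)

theorem card_le_prod_max_one_div_successiveMin (L : Submodule ℤ E) [DiscreteTopology L]
    {A : Finset E} {R : ℝ} (hR : 0 < R) (hAL : (A : Set E) ⊆ L) (hAR : diam (A : Set E) ≤ R) :
    (#A : ℝ) ≤
      ∏ i ∈ Icc 1 (Set.finrank ℝ (L : Set E)), max 1 (2 * R / successiveMin (L : Set E) i) := by
  obtain ⟨ε, hε, hεL⟩ := exists_pos_forall_norm_lt_eq_zero L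
  obtain ⟨j, hj⟩ : ∃ j : ℕ, R < 2 ^ j * ε := by
    obtain ⟨j, hj⟩ := pow_unbounded_of_one_lt (R / ε) one_lt_two
    exact ⟨j, (div_lt_iff₀ hε).1 hj⟩
  induction j generalizing R A with
  | zero =>
    have hcard : #A ≤ 1 := card_le_one.2 fun a ha b hb => by
      have hab : ‖a - b‖ < ε := by
        rw [← dist_eq_norm]
        have := dist_le_diam_of_mem A.finite_toSet.isBounded ha hb
        linarith
      exact sub_eq_zero.1 (hεL _ (L.sub_mem (hAL ha) (hAL hb)) hab)
    exact (Nat.cast_le_one.2 hcard).trans (one_le_prod fun _ _ => le_max_left _ _)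
  | succ j ih =>
    obtain ⟨B, hBL, hBR, hAB⟩ :=
      exists_diam_le_half_card_le_two_pow_finrank_mul_card L hAL hAR
    have hB := ih (half_pos hR) hBL hBR (by rw [pow_succ] at hj; linarith)
    rw [mul_div_cancel₀ R two_ne_zero] at hB
    calc (#A : ℝ) ≤ 2 ^ Set.finrank ℝ ((L : Set E) ∩ closedBall 0 R) * #B := by
          exact_mod_cast hAB
      _ ≤ _ := mul_le_mul_of_nonneg_left hB (by positivity)
      _ ≤ _ := two_pow_finrank_inter_closedBall_mul_prod_le L hR
end SuccessiveMin

theorem card_Icc_floor_neg_floor_le {x : ℝ} (hx : 0 ≤ x) :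
    (#(Icc ⌊-x⌋ ⌊x⌋) : ℝ) ≤ 4 * max 1 x := by
  have hle : ⌊-x⌋ ≤ ⌊x⌋ + 1 := (Int.floor_le_floor (by linarith)).trans (Int.le_add_one le_rfl)
  have hcard : (#(Icc ⌊-x⌋ ⌊x⌋) : ℝ) = ⌊x⌋ + 1 - ⌊-x⌋ := by
    exact_mod_cast Int.card_Icc_of_le _ _ hle
  linarith [Int.floor_le x, Int.lt_floor_add_one (-x), le_max_left 1 x, le_max_right 1 x]

theorem card_le_mul_prod_of_forall_diam_le {ι : Type*} [Fintype ι] {A : Finset (ι → ℝ)}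
    {P : ι → ℝ} {ρ N : ℝ} (hρ : 0 < ρ) (hP : ∀ i, 0 ≤ P i) (hAP : ∀ a ∈ A, ∀ i, |a i| ≤ P i)
    (hN : ∀ B ⊆ A, diam (B : Set (ι → ℝ)) ≤ ρ → (#B : ℝ) ≤ N) :
    (#A : ℝ) ≤ N * ∏ i, 4 * max 1 (P i / ρ) := by
  classical
  let cell (a : ι → ℝ) (i : ι) : ℤ := ⌊a i / ρ⌋
  let cells : Finset (ι → ℤ) := Fintype.piFinset fun i => Icc ⌊-(P i / ρ)⌋ ⌊P i / ρ⌋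
  have hcell : ∀ a ∈ A, cell a ∈ cells := fun a ha => Fintype.mem_piFinset.2 fun i => by
    obtain ⟨hl, hu⟩ := abs_le.1 (hAP a ha i)
    rw [← neg_div, mem_Icc]
    exact ⟨Int.floor_le_floor (by gcongr), Int.floor_le_floor (by gcongr)⟩
  have hfiber (c : ι → ℤ) : (#{a ∈ A | cell a = c} : ℝ) ≤ N := by
    refine hN _ (filter_subset _ _) (diam_le_of_forall_dist_le hρ.le fun a ha b hb => ?_)
    refine (dist_pi_le_iff hρ.le).2 fun i => ?_
    have hab : ⌊a i / ρ⌋ = ⌊b i / ρ⌋ :=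
      congrFun ((mem_filter.1 ha).2.trans (mem_filter.1 hb).2.symm) i
    have hlt := Int.abs_sub_lt_one_of_floor_eq_floor hab
    rw [← sub_div, abs_div, abs_of_pos hρ, div_lt_one hρ] at hlt
    exact hlt.le
  have hN₀ : 0 ≤ N := by simpa using hN ∅ (empty_subset A) (by simpa using hρ.le)
  calc (#A : ℝ) = ∑ c ∈ cells, (#{a ∈ A | cell a = c} : ℝ) := by
        exact_mod_cast card_eq_sum_card_fiberwise hcell
    _ ≤ ∑ _c ∈ cells, N := sum_le_sum fun c _ => hfiber c
    _ = N * ∏ i, (#(Icc ⌊-(P i / ρ)⌋ ⌊P i / ρ⌋) : ℝ) := by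
        rw [sum_const, nsmul_eq_mul, mul_comm, Fintype.card_piFinset, Nat.cast_prod]
    _ ≤ N * ∏ i, 4 * max 1 (P i / ρ) := by
        gcongr with i
        exact card_Icc_floor_neg_floor_le (div_nonneg (hP i) hρ.le)

theorem card_le_pow_mul_prod_max_one_mul_prod_max_one {ι : Type*} [Fintype ι]
    (L : Submodule ℤ (ι → ℝ)) [DiscreteTopology L] {A : Finset (ι → ℝ)} {P : ι → ℝ} {ρ : ℝ}
    (hρ : 0 < ρ) (hP : ∀ i, 0 ≤ P i) (hAL : (A : Set (ι → ℝ)) ⊆ L)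
    (hAP : ∀ a ∈ A, ∀ i, |a i| ≤ P i) :
    (#A : ℝ) ≤ 8 ^ Fintype.card ι *
      ((∏ i ∈ Icc 1 (Set.finrank ℝ (L : Set (ι → ℝ))),
        max 1 (ρ / successiveMin (L : Set (ι → ℝ)) i)) * ∏ i, max 1 (P i / ρ)) := by
  set d := Set.finrank ℝ (L : Set (ι → ℝ))
  set μ := successiveMin (L : Set (ι → ℝ))
  have hd : d ≤ Fintype.card ι := (Submodule.finrank_le _).trans_eq (finrank_fintype_fun_eq_card ℝ)
  have hdouble : ∏ i ∈ Icc 1 d, max 1 (2 * ρ / μ i) ≤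
      2 ^ Fintype.card ι * ∏ i ∈ Icc 1 d, max 1 (ρ / μ i) := by
    calc ∏ i ∈ Icc 1 d, max 1 (2 * ρ / μ i) ≤ ∏ i ∈ Icc 1 d, 2 * max 1 (ρ / μ i) := by
          gcongr with i
          rw [mul_max_of_nonneg _ _ zero_le_two, mul_div_assoc]
          exact max_le_max (by norm_num) le_rfl
      _ = 2 ^ d * ∏ i ∈ Icc 1 d, max 1 (ρ / μ i) := by
          rw [prod_mul_distrib, prod_const, Nat.card_Icc, Nat.add_sub_cancel]
      _ ≤ _ := by
          gcongr
          exact one_le_two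
  calc (#A : ℝ) ≤ (∏ i ∈ Icc 1 d, max 1 (2 * ρ / μ i)) * ∏ i, 4 * max 1 (P i / ρ) :=
        card_le_mul_prod_of_forall_diam_le hρ hP hAP fun B hBA hB =>
          card_le_prod_max_one_div_successiveMin L hρ ((coe_subset.2 hBA).trans hAL) hB
    _ ≤ (2 ^ Fintype.card ι * ∏ i ∈ Icc 1 d, max 1 (ρ / μ i)) *
          (4 ^ Fintype.card ι * ∏ i, max 1 (P i / ρ)) := by
        rw [prod_mul_distrib, prod_const, card_univ]
        gcongr
    _ = _ := by
        rw [mul_mul_mul_comm, ← mul_pow]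
        norm_num

theorem exists_mem_and_forall_le_or_exists_not_and_forall_le_or_le {α : Type*} [LinearOrder α]
    {T : Finset α} {p : α → Prop} (h : ∃ x ∈ T, p x) :
    ∃ ρ ∈ T, p ρ ∧ ((∀ x ∈ T, ρ ≤ x) ∨ ∃ σ ∈ T, ¬p σ ∧ ∀ x ∈ T, x ≤ σ ∨ ρ ≤ x) := by
  classical
  obtain ⟨x, hxT, hx⟩ := h
  obtain ⟨ρ, hρ, hmin⟩ := exists_min_image {x ∈ T | p x} id ⟨x, mem_filter.2 ⟨hxT, hx⟩⟩
  obtain ⟨hρT, hpρ⟩ := mem_filter.1 hρ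
  refine ⟨ρ, hρT, hpρ, ?_⟩
  rcases {x ∈ T | x < ρ}.eq_empty_or_nonempty with hnone | hsome
  · exact .inl fun x hx => not_lt.1 (filter_eq_empty_iff.1 hnone hx)
  obtain ⟨σ, hσ, hmax⟩ := exists_max_image _ id hsome
  obtain ⟨hσT, hσρ⟩ := mem_filter.1 hσ
  exact .inr ⟨σ, hσT, fun hpσ => (hmin σ (mem_filter.2 ⟨hσT, hpσ⟩)).not_gt hσρ,
    fun x hx => (lt_or_ge x ρ).imp_left fun hxρ => hmax x (mem_filter.2 ⟨hx, hxρ⟩)⟩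

-- As `x` grows, `#{f ≤ x}` increases and `#{x < g}` decreases; `ρ` is where they cross.
theorem exists_pos_card_filter_lt_le_and_card_filter_lt_le {ι κ : Type*} (s : Finset ι)
    (t : Finset κ) {f : ι → ℝ} (g : κ → ℝ) (hf : ∀ i ∈ s, 0 < f i) :
    ∃ ρ > 0, #{i ∈ s | f i < ρ} ≤ #{j ∈ t | ρ ≤ g j} ∧
      #{j ∈ t | ρ < g j} ≤ #{i ∈ s | f i ≤ ρ} := by
  classical
  let T : Finset ℝ := {x ∈ insert 1 (s.image f ∪ t.image g) | 0 < x}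
  have hTpos {x} (hx : x ∈ T) : 0 < x := (mem_filter.1 hx).2
  have hfT {i} (hi : i ∈ s) : f i ∈ T := mem_filter.2
    ⟨mem_insert_of_mem (mem_union_left _ (mem_image_of_mem f hi)), hf i hi⟩
  have hgT {x} (hx : x ∈ T) {j} (hj : j ∈ t) (hlt : x < g j) : g j ∈ T := mem_filter.2
    ⟨mem_insert_of_mem (mem_union_right _ (mem_image_of_mem g hj)), (hTpos hx).trans hlt⟩
  obtain ⟨m, hmT, hm⟩ := exists_max_image T id ⟨1, by simp [T]⟩
  have hempty : {j ∈ t | m < g j} = ∅ := filter_eq_empty_iff.2 fun j hj hlt =>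
    (hm _ (hgT hmT hj hlt)).not_gt hlt
  obtain ⟨ρ, hρT, hρ, hpred⟩ := exists_mem_and_forall_le_or_exists_not_and_forall_le_or_le
    (p := fun x => #{j ∈ t | x < g j} ≤ #{i ∈ s | f i ≤ x}) ⟨m, hmT, by simp [hempty]⟩
  refine ⟨ρ, hTpos hρT, ?_, hρ⟩
  rcases hpred with hleast | ⟨σ, hσT, hσ, hgap⟩
  · rw [filter_false_of_mem fun i hi => not_lt.2 (hleast _ (hfT hi))]
    exact Nat.zero_le _
  · calc #{i ∈ s | f i < ρ} ≤ #{i ∈ s | f i ≤ σ} := card_le_card <|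
          monotone_filter_right s fun i hi hlt => (hgap _ (hfT hi)).resolve_right hlt.not_ge
      _ ≤ #{j ∈ t | σ < g j} := (not_le.1 hσ).le
      _ ≤ #{j ∈ t | ρ ≤ g j} := card_le_card <|
          monotone_filter_right t fun j hj hlt => (hgap _ (hgT hσT hj hlt)).resolve_left hlt.not_ge

theorem prod_max_one_div_eq {ι : Type*} {s S : Finset ι} (hS : S ⊆ s) {f g : ι → ℝ}
    (hg : ∀ i ∈ s, 0 < g i) (hmem : ∀ i ∈ S, g i ≤ f i) (hnmem : ∀ i ∈ s, i ∉ S → f i ≤ g i) :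
    ∏ i ∈ s, max 1 (f i / g i) = (∏ i ∈ S, f i) / ∏ i ∈ S, g i := by
  rw [← prod_div_distrib, ← prod_subset hS fun i hi hiS =>
    max_eq_left ((div_le_one (hg i hi)).2 (hnmem i hi hiS))]
  exact prod_congr rfl fun i hi => max_eq_right ((one_le_div (hg i (hS hi))).2 (hmem i hi))

section Monotone
variable {l : ℕ → ℝ} {d m : ℕ} {ρ : ℝ}

theorem forall_mem_Icc_le_of_le_card_filter_le (hmono : MonotoneOn l (Icc 1 d))
    (hm : m ≤ #{i ∈ Icc 1 d | l i ≤ ρ}) : ∀ i ∈ Icc 1 m, l i ≤ ρ := by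
  intro i hi
  by_contra! hlt
  have hsub : {j ∈ Icc 1 d | l j ≤ ρ} ⊆ Ico 1 i := fun j hj => by
    obtain ⟨hjd, hjρ⟩ := mem_filter.1 hj
    refine mem_Ico.2 ⟨(mem_Icc.1 hjd).1, ?_⟩
    by_contra! hij
    have hid : i ∈ Icc 1 d := mem_Icc.2 ⟨(mem_Icc.1 hi).1, hij.trans (mem_Icc.1 hjd).2⟩
    exact (hlt.trans_le (hmono hid hjd hij)).not_ge hjρ
  have hcard := hm.trans (card_le_card hsub)
  rw [Nat.card_Ico] at hcard
  have := mem_Icc.1 hi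
  lia

theorem forall_notMem_Icc_le_of_card_filter_lt_le (hmono : MonotoneOn l (Icc 1 d))
    (hm : #{i ∈ Icc 1 d | l i < ρ} ≤ m) : ∀ i ∈ Icc 1 d, i ∉ Icc 1 m → ρ ≤ l i := by
  intro i hi him
  by_contra! hlt
  have hsub : Icc 1 i ⊆ {j ∈ Icc 1 d | l j < ρ} := fun j hj => by
    have hjd : j ∈ Icc 1 d :=
      mem_Icc.2 ⟨(mem_Icc.1 hj).1, (mem_Icc.1 hj).2.trans (mem_Icc.1 hi).2⟩
    exact mem_filter.2 ⟨hjd, (hmono hjd hi (mem_Icc.1 hj).2).trans_lt hlt⟩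
  have hcard := (card_le_card hsub).trans hm
  rw [Nat.card_Icc, Nat.add_sub_cancel] at hcard
  exact him (mem_Icc.2 ⟨(mem_Icc.1 hi).1, hcard⟩)

theorem exists_pos_finset_separating {ι : Type*} [Finite ι] (P : ι → ℝ)
    (hl : ∀ i ∈ Icc 1 d, 0 < l i) (hmono : MonotoneOn l (Icc 1 d)) :
    ∃ ρ > 0, ∃ S : Finset ι, #S ≤ d ∧ (∀ i ∈ S, ρ ≤ P i) ∧ (∀ i ∉ S, P i ≤ ρ) ∧
      (∀ i ∈ Icc 1 #S, l i ≤ ρ) ∧ ∀ i ∈ Icc 1 d, i ∉ Icc 1 #S → ρ ≤ l i := by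
  classical
  have := Fintype.ofFinite ι
  obtain ⟨ρ, hρ, hlP, hPl⟩ :=
    exists_pos_card_filter_lt_le_and_card_filter_lt_le (Icc 1 d) univ P hl
  obtain ⟨S, hSlt, hSle, hS⟩ := exists_subsuperset_card_eq
    (n := max #{i ∈ Icc 1 d | l i < ρ} #{j | ρ < P j})
    (monotone_filter_right univ fun _ _ => le_of_lt) (le_max_right _ _)
    (max_le hlP (card_le_card (monotone_filter_right univ fun _ _ => le_of_lt)))
  have hltS : #{i ∈ Icc 1 d | l i < ρ} ≤ #S := (le_max_left _ _).trans hS.ge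
  have hleS : #S ≤ #{i ∈ Icc 1 d | l i ≤ ρ} := hS.trans_le
    (max_le (card_le_card (monotone_filter_right _ fun _ _ => le_of_lt)) hPl)
  refine ⟨ρ, hρ, S, ?_, fun i hi => (mem_filter.1 (hSle hi)).2, fun i hi => ?_,
    forall_mem_Icc_le_of_le_card_filter_le hmono hleS,
    forall_notMem_Icc_le_of_card_filter_lt_le hmono hltS⟩
  · simpa using hleS.trans (card_filter_le _ _)
  · exact not_lt.1 fun hlt => hi (hSlt (mem_filter.2 ⟨mem_univ i, hlt⟩))

end Monotone

theorem finite_inter_box {ι : Type*} [Finite ι] (L : Submodule ℤ (ι → ℝ)) [DiscreteTopology L]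
    (P : ι → ℝ) : ((L : Set (ι → ℝ)) ∩ {v | ∀ i, |v i| ≤ P i}).Finite := by
  have := Fintype.ofFinite ι
  have hbox : {v : ι → ℝ | ∀ i, |v i| ≤ P i} = Set.Icc (-P) P := by
    ext v
    simp only [Set.mem_ofPred_eq, abs_le, Set.mem_Icc, Pi.le_def, Pi.neg_apply, forall_and]
  rw [Set.inter_comm, hbox]
  exact finite_isBounded_inter_isClosed DiscreteTopology.isDiscrete (isBounded_Icc _ _)
    (AddSubgroup.isClosed_of_discrete (H := L.toAddSubgroup))

theorem exists_ncard_inter_box_le_pow_mul_prod_div_prod_successiveMin {ι : Type*}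
    [Fintype ι] (L : Submodule ℤ (ι → ℝ)) [DiscreteTopology L] {P : ι → ℝ} (hP : ∀ i, 0 ≤ P i) :
    ∃ S : Finset ι, #S ≤ Set.finrank ℝ (L : Set (ι → ℝ)) ∧
      (((L : Set (ι → ℝ)) ∩ {v | ∀ i, |v i| ≤ P i}).ncard : ℝ) ≤ 8 ^ Fintype.card ι *
        ((∏ i ∈ S, P i) / ∏ r ∈ Icc 1 #S, successiveMin (L : Set (ι → ℝ)) r) := by
  set d := Set.finrank ℝ (L : Set (ι → ℝ))
  set μ := successiveMin (L : Set (ι → ℝ))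
  have hμ : ∀ i ∈ Icc 1 d, 0 < μ i := fun i hi => by
    obtain ⟨hi₁, hid⟩ := mem_Icc.1 hi
    exact successiveMin_pos L (by lia) hid
  have hmono : MonotoneOn μ (Icc 1 d) := fun i _ j hj hij =>
    successiveMin_le_successiveMin hij (mem_Icc.1 hj).2
  obtain ⟨ρ, hρ, S, hSd, hρP, hPρ, hμρ, hρμ⟩ := exists_pos_finset_separating P hμ hmono
  refine ⟨S, hSd, ?_⟩
  have hfin := finite_inter_box L P
  have hcard := card_le_pow_mul_prod_max_one_mul_prod_max_one L (A := hfin.toFinset) hρ hP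
    (by simp) (by simp +contextual)
  rw [prod_max_one_div_eq (Icc_subset_Icc_right hSd) hμ hμρ hρμ,
    prod_max_one_div_eq (subset_univ S) (fun _ _ => hρ) hρP (fun i _ => hPρ i),
    prod_const, prod_const, Nat.card_Icc, Nat.add_sub_cancel, mul_comm (_ / _),
    div_mul_div_cancel₀ (pow_ne_zero _ hρ.ne')] at hcard
  rwa [Set.ncard_eq_toFinset_card _ hfin]

section Euclidean
variable {ι : Type*} [Fintype ι]

theorem norm_le_enorm2 (v : ι → ℝ) : ‖v‖ ≤ enorm2 v :=
  (pi_norm_le_iff_of_nonneg (Real.sqrt_nonneg _)).2 fun i => Real.abs_le_sqrt <|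
    single_le_sum (f := fun i => v i ^ 2) (fun i _ => sq_nonneg (v i)) (mem_univ i)

theorem enorm2_le_sqrt_card_mul_norm (v : ι → ℝ) : enorm2 v ≤ √(Fintype.card ι) * ‖v‖ := by
  rw [enorm2, ← Real.sqrt_sq (norm_nonneg v), ← Real.sqrt_mul (Nat.cast_nonneg _)]
  refine Real.sqrt_le_sqrt ?_
  calc ∑ i, v i ^ 2 ≤ ∑ _i : ι, ‖v‖ ^ 2 :=
        sum_le_sum fun i _ => sq_le_sq.2 (by simpa using norm_le_pi_norm v i)
    _ = Fintype.card ι * ‖v‖ ^ 2 := by rw [sum_const, card_univ, nsmul_eq_mul]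

variable {Λ : Set (ι → ℝ)} {s : ℕ}

theorem succMin_le_mul {r C : ℝ} (hC₀ : 0 < C) (hC : ∀ v : ι → ℝ, enorm2 v ≤ C * ‖v‖)
    (hr : 0 < r) (hs : s ≤ Set.finrank ℝ (Λ ∩ closedBall 0 r)) : succMin Λ s ≤ C * r := by
  obtain ⟨w, hwΛ, hw⟩ := le_setFinrank_iff_exists_linearIndependent.1 hs
  exact csInf_le ⟨0, fun _ hr => hr.1.le⟩ ⟨mul_pos hC₀ hr, w, fun k => (hwΛ k).1, hw, fun k =>
    (hC _).trans (mul_le_mul_of_nonneg_left (mem_closedBall_zero_iff.1 (hwΛ k).2) hC₀.le)⟩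

theorem succMin_le_mul_successiveMin {C : ℝ} (hC₀ : 0 < C) (hC : ∀ v : ι → ℝ, enorm2 v ≤ C * ‖v‖)
    (hs : s ≤ Set.finrank ℝ Λ) : succMin Λ s ≤ C * successiveMin Λ s := by
  rw [← div_le_iff₀' hC₀]
  exact le_csInf (exists_pos_le_finrank_inter_closedBall hs) fun r hr =>
    (div_le_iff₀' hC₀).2 (succMin_le_mul hC₀ hC hr.1 hr.2)

theorem successiveMin_le_succMin (hs : s ≤ Set.finrank ℝ Λ) :
    successiveMin Λ s ≤ succMin Λ s := by
  refine le_csInf ?_ ?_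
  · obtain ⟨w, hwΛ, hw⟩ := le_setFinrank_iff_exists_linearIndependent.1 hs
    obtain ⟨r, hr, hwr⟩ := ((Set.finite_range w).image enorm2).isBounded.exists_pos_norm_le
    exact ⟨r, hr, w, hwΛ, hw, fun k =>
      (le_abs_self _).trans (hwr _ (Set.mem_image_of_mem _ (Set.mem_range_self k)))⟩
  · rintro r ⟨hr, w, hwΛ, hw, hwr⟩
    exact successiveMin_le hr (le_setFinrank_iff_exists_linearIndependent.2 ⟨w, fun k =>
      ⟨hwΛ k, mem_closedBall_zero_iff.2 ((norm_le_enorm2 _).trans (hwr k))⟩, hw⟩)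

theorem succMin_pos (L : Submodule ℤ (ι → ℝ)) [DiscreteTopology L] (hs₀ : s ≠ 0)
    (hs : s ≤ Set.finrank ℝ (L : Set (ι → ℝ))) : 0 < succMin (L : Set (ι → ℝ)) s :=
  (successiveMin_pos L hs₀ hs).trans_le (successiveMin_le_succMin hs)

theorem prod_succMin_le_pow_mul_prod_successiveMin {C : ℝ} (hC₀ : 0 < C)
    (hC : ∀ v : ι → ℝ, enorm2 v ≤ C * ‖v‖) (hs : s ≤ Set.finrank ℝ Λ) :
    ∏ r ∈ Icc 1 s, succMin Λ r ≤ C ^ s * ∏ r ∈ Icc 1 s, successiveMin Λ r :=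
  calc ∏ r ∈ Icc 1 s, succMin Λ r ≤ ∏ r ∈ Icc 1 s, C * successiveMin Λ r :=
        prod_le_prod (fun _ _ => Real.sInf_nonneg fun _ hr => hr.1.le) fun _ hr =>
          succMin_le_mul_successiveMin hC₀ hC ((mem_Icc.1 hr).2.trans hs)
    _ = C ^ s * ∏ r ∈ Icc 1 s, successiveMin Λ r := by
        rw [prod_mul_distrib, prod_const, Nat.card_Icc, Nat.add_sub_cancel]

theorem exists_ncard_inter_box_le_mul_prod_div_prod_succMin (L : Submodule ℤ (ι → ℝ))
    [DiscreteTopology L] {P : ι → ℝ} (hP : ∀ i, 0 ≤ P i) :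
    ∃ S : Finset ι, #S ≤ Set.finrank ℝ (L : Set (ι → ℝ)) ∧
      (((L : Set (ι → ℝ)) ∩ {v | ∀ i, |v i| ≤ P i}).ncard : ℝ) ≤
        (8 * max 1 √(Fintype.card ι)) ^ Fintype.card ι *
          ((∏ i ∈ S, P i) / ∏ r ∈ Icc 1 #S, succMin (L : Set (ι → ℝ)) r) := by
  let C : ℝ := max 1 √(Fintype.card ι)
  have hC₁ : 1 ≤ C := le_max_left _ _
  have hC (v : ι → ℝ) : enorm2 v ≤ C * ‖v‖ := (enorm2_le_sqrt_card_mul_norm v).trans <|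
    mul_le_mul_of_nonneg_right (le_max_right _ _) (norm_nonneg v)
  obtain ⟨S, hS, hcard⟩ := exists_ncard_inter_box_le_pow_mul_prod_div_prod_successiveMin L hP
  refine ⟨S, hS, hcard.trans ?_⟩
  have hμ : 0 < ∏ r ∈ Icc 1 #S, successiveMin (L : Set (ι → ℝ)) r := prod_pos fun r hr =>
    successiveMin_pos L (Nat.one_le_iff_ne_zero.1 (mem_Icc.1 hr).1) ((mem_Icc.1 hr).2.trans hS)
  have hlam : 0 < ∏ r ∈ Icc 1 #S, succMin (L : Set (ι → ℝ)) r := prod_pos fun r hr =>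
    succMin_pos L (Nat.one_le_iff_ne_zero.1 (mem_Icc.1 hr).1) ((mem_Icc.1 hr).2.trans hS)
  have hprod : ∏ r ∈ Icc 1 #S, succMin (L : Set (ι → ℝ)) r ≤
      C ^ Fintype.card ι * ∏ r ∈ Icc 1 #S, successiveMin (L : Set (ι → ℝ)) r :=
    (prod_succMin_le_pow_mul_prod_successiveMin (by positivity) hC hS).trans <|
      mul_le_mul_of_nonneg_right (pow_le_pow_right₀ hC₁ (card_le_univ S)) hμ.le
  have hP' : 0 ≤ ∏ i ∈ S, P i := prod_nonneg fun i _ => hP i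
  rw [mul_pow, mul_assoc]
  gcongr
  rw [← mul_div_assoc, div_le_div_iff₀ hμ hlam]
  linarith [mul_le_mul_of_nonneg_left hprod hP']

end Euclidean

/-- The quantity `𝒱_s(B_P)`: the largest product of `s` of the numbers `P i` with distinct indices.
If `s` exceeds the number of indices, its value is `sSup ∅ = 0`. -/
noncomputable def maxProd {ι : Type*} (P : ι → ℝ) (s : ℕ) : ℝ :=
  sSup ((fun S : Finset ι => ∏ i ∈ S, P i) '' {S | #S = s})

section MaxProd
variable {ι : Type*} {P : ι → ℝ}

theorem prod_le_maxProd [Finite ι] (S : Finset ι) : ∏ i ∈ S, P i ≤ maxProd P #S :=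
  le_csSup (Set.toFinite _).bddAbove ⟨S, rfl, rfl⟩

theorem maxProd_nonneg (hP : ∀ i, 0 ≤ P i) (s : ℕ) : 0 ≤ maxProd P s :=
  Real.sSup_nonneg <| Set.forall_mem_image.2 fun _ _ => prod_nonneg fun i _ => hP i

theorem prod_div_prod_le_one_add_sum_maxProd_div_prod [Finite ι] (hP : ∀ i, 0 ≤ P i) {d : ℕ}
    {l : ℕ → ℝ} (hl : ∀ r ∈ Icc 1 d, 0 < l r) {S : Finset ι} (hS : #S ≤ d) :
    (∏ i ∈ S, P i) / ∏ r ∈ Icc 1 #S, l r ≤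
      1 + ∑ s ∈ Icc 1 d, maxProd P s / ∏ r ∈ Icc 1 s, l r := by
  have hprod {s : ℕ} (hs : s ≤ d) : 0 < ∏ r ∈ Icc 1 s, l r :=
    prod_pos fun r hr => hl r (Icc_subset_Icc_right hs hr)
  have hterm : ∀ s ∈ Icc 1 d, 0 ≤ maxProd P s / ∏ r ∈ Icc 1 s, l r := fun s hs =>
    div_nonneg (maxProd_nonneg hP s) (hprod (mem_Icc.1 hs).2).le
  rcases S.eq_empty_or_nonempty with rfl | hne
  · simpa using sum_nonneg hterm
  calc (∏ i ∈ S, P i) / ∏ r ∈ Icc 1 #S, l r ≤ maxProd P #S / ∏ r ∈ Icc 1 #S, l r :=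
        div_le_div_of_nonneg_right (prod_le_maxProd S) (hprod hS).le
    _ ≤ ∑ s ∈ Icc 1 d, maxProd P s / ∏ r ∈ Icc 1 s, l r :=
        single_le_sum hterm (mem_Icc.2 ⟨hne.card_pos, hS⟩)
    _ ≤ _ := le_add_of_nonneg_left zero_le_one

end MaxProd

theorem discreteTopology_span_int_range {E ι : Type*} [NormedAddCommGroup E]
    [NormedSpace ℝ E] [FiniteDimensional ℝ E] {b : ι → E} (hb : LinearIndependent ℝ b) :
    DiscreteTopology (Submodule.span ℤ (Set.range b)) := by
  let e := Basis.extend hb.linearIndepOn_id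
  refine .of_subset (s := (Submodule.span ℤ (Set.range e) : Set E)) ?_ (Submodule.span_mono ?_)
  · have := Module.Finite.finite_basis e
    exact inferInstanceAs (DiscreteTopology (Submodule.span ℤ (Set.range e)))
  · rw [Basis.range_extend]
    exact hb.linearIndepOn_id.subset_extend _

theorem finrank_span_int_range {E ι : Type*} [AddCommGroup E] [Module ℝ E] [Fintype ι] {b : ι → E}
    (hb : LinearIndependent ℝ b) :
    Set.finrank ℝ (Submodule.span ℤ (Set.range b) : Set E) = Fintype.card ι := by
  rw [Set.finrank, Submodule.span_span_of_tower, finrank_span_eq_card hb]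

theorem stmt4_general (ι : Type*) [Fintype ι] :
    ∃ c₀ : ℝ, 0 < c₀ ∧ ∀ (L : Submodule ℤ (ι → ℝ)) [DiscreteTopology L] (P : ι → ℝ),
      (∀ i, 0 ≤ P i) → (((L : Set (ι → ℝ)) ∩ {v | ∀ i, |v i| ≤ P i}).ncard : ℝ) ≤
        c₀ * (1 + ∑ s ∈ Icc 1 (Set.finrank ℝ (L : Set (ι → ℝ))),
          maxProd P s / ∏ r ∈ Icc 1 s, succMin (L : Set (ι → ℝ)) r) := by
  refine ⟨(8 * max 1 √(Fintype.card ι)) ^ Fintype.card ι, by positivity, fun L _ P hP => ?_⟩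
  obtain ⟨S, hS, hcard⟩ := exists_ncard_inter_box_le_mul_prod_div_prod_succMin L hP
  have hpos : ∀ r ∈ Icc 1 (Set.finrank ℝ (L : Set (ι → ℝ))), 0 < succMin (L : Set (ι → ℝ)) r :=
    fun r hr => succMin_pos L (Nat.one_le_iff_ne_zero.1 (mem_Icc.1 hr).1) (mem_Icc.1 hr).2
  exact hcard.trans <| mul_le_mul_of_nonneg_left
    (prod_div_prod_le_one_add_sum_maxProd_div_prod hP hpos hS) (by positivity)

theorem stmt4 (n : ℕ) (hn : 0 < n) :
    ∃ c₀ : ℝ, 0 < c₀ ∧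
      -- a full-rank lattice in `ℝ^n` is the `ℤ`-span of an `ℝ`-basis `b`
      ∀ b : Fin n → (Fin n → ℝ), LinearIndependent ℝ b →
      ∀ P : Fin n → ℝ, (∀ i, 0 ≤ P i) →
        (Set.ncard ((↑(Submodule.span ℤ (Set.range b)) : Set (Fin n → ℝ)) ∩
            {v | ∀ i, |v i| ≤ P i}) : ℝ) ≤
          c₀ * (1 + ∑ s ∈ Finset.Icc 1 n,
            sSup ((fun S : Finset (Fin n) => ∏ i ∈ S, P i) '' {S | S.card = s}) /
              ∏ r ∈ Finset.Icc 1 s,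
                succMin (↑(Submodule.span ℤ (Set.range b)) : Set (Fin n → ℝ)) r) := by
  obtain ⟨c₀, hc₀, h⟩ := stmt4_general (Fin n)
  refine ⟨c₀, hc₀, fun b hb P hP => ?_⟩
  have := discreteTopology_span_int_range hb
  simpa only [finrank_span_int_range hb, Fintype.card_fin, maxProd] using
    h (Submodule.span ℤ (Set.range b)) P hP
end

section
/- Let M, N be positive integers and let L ∈ ℝ^{M×N} have the property that for each i the entries L_{i1},…,L_{iN} together with 1 are linearly independent over ℚ. Let ε, T > 0 and Q ∈ [1,∞)^N, and for i = 1,…,M set Z^i := (H ∩ {x ∈ ℝ^M : x_i = 0}) × ∏_{j=1}^N [−Q_j, Q_j]. Then there exists a constant c₀ > 0 depending only on M such that #(Λ_L ∩ Z^i) ≤ c₀ (1+T)^M for every i = 1,…,M. -/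
/-- The entries of each row of `L`, together with `1`, are linearly independent over `ℚ`. -/
def rowUnitIndep (M N : ℕ) (L : Matrix (Fin M) (Fin N) ℝ) : Prop :=
  ∀ i, LinearIndependent ℚ (Fin.cons (1 : ℝ) (fun j => L i j) : Fin (N + 1) → ℝ)

/-- The lattice `Λ_L = A_L ℤ^(M+N)`, as a set of vectors in `ℝ^M × ℝ^N`. -/
def latticeL (M N : ℕ) (L : Matrix (Fin M) (Fin N) ℝ) : Set (Fin M ⊕ Fin N → ℝ) :=
  {v | ∃ (p : Fin M → ℤ) (q : Fin N → ℤ),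
    (∀ i, v (Sum.inl i) = (∑ j, L i j * (q j : ℝ)) + (p i : ℝ)) ∧
    (∀ j, v (Sum.inr j) = (q j : ℝ))}

/-- The set `Z^i = (H ∩ {x_i = 0}) × ∏ [-Q_j, Q_j]`. -/
def setZi (M N : ℕ) (ε T : ℝ) (Q : Fin N → ℝ) (i : Fin M) : Set (Fin M ⊕ Fin N → ℝ) :=
  {v | (∏ i', |v (Sum.inl i')|) < ε ∧ (∀ i', |v (Sum.inl i')| ≤ T) ∧
    v (Sum.inl i) = 0 ∧ ∀ j, |v (Sum.inr j)| ≤ Q j}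

/-!
If the `i`-th coordinate `L_i q + p_i` of a lattice point vanishes, rational independence of
`1, L_{i1}, …, L_{iN}` forces `q = 0` and `p_i = 0`, so the point is `(p, 0)` with `p` integral.
Conversely, each `(p, 0)` with `p_i = 0` and `|p_k| ≤ T` lies in `Z^i`, because the product of its
first `M` coordinates is `0 < ε`. Hence the points to count are those of an integer box in the
`M - 1` remaining coordinates, and there are exactly `(2⌊T⌋ + 1)^(M - 1)` of them.
-/

theorem eq_zero_of_sum_mul_intCast_add_intCast_eq_zero {A : Type*} [Ring A] {n : ℕ}
    {a : Fin n → A} (ha : LinearIndependent ℤ (Fin.cons 1 a : Fin (n + 1) → A))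
    {q : Fin n → ℤ} {p : ℤ} (h : ∑ j, a j * (q j : A) + (p : A) = 0) : q = 0 ∧ p = 0 := by
  have relation : ∑ j : Fin (n + 1),
      (Fin.cons p q : Fin (n + 1) → ℤ) j • (Fin.cons 1 a : Fin (n + 1) → A) j = 0 := by
    simpa only [Fin.sum_univ_succ, Fin.cons_zero, Fin.cons_succ, zsmul_eq_mul, mul_one, one_mul,
      (Int.cast_commute _ _).eq, add_comm] using h
  have coeff_eq_zero := Fintype.linearIndependent_iff.mp ha (Fin.cons p q) relation
  exact ⟨funext fun j => coeff_eq_zero j.succ, coeff_eq_zero 0⟩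

theorem two_mul_natFloor_add_one_pow_le {R : Type*} [Semiring R] [LinearOrder R]
    [IsStrictOrderedRing R] [FloorSemiring R] {T : R} (hT : 0 ≤ T) {m n : ℕ} (hmn : m ≤ n) :
    (2 * (⌊T⌋₊ : R) + 1) ^ m ≤ 2 ^ n * (1 + T) ^ n := by
  have base_le : 2 * (⌊T⌋₊ : R) + 1 ≤ 2 * (1 + T) := by
    rw [mul_add, mul_one, add_comm]
    gcongr
    · exact one_le_two
    · exact Nat.floor_le hT
  calc (2 * (⌊T⌋₊ : R) + 1) ^ m
      ≤ (2 * (⌊T⌋₊ : R) + 1) ^ n :=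
        pow_le_pow_right₀ (le_add_of_nonneg_left (by positivity)) hmn
    _ ≤ (2 * (1 + T)) ^ n := by gcongr
    _ = 2 ^ n * (1 + T) ^ n := (Commute.ofNat_left 2 (1 + T)).mul_pow n

section IntegerBox

variable {R : Type*} [Ring R] [LinearOrder R] [FloorRing R]

theorem card_Icc_neg_floor_floor {T : R} (hT : 0 ≤ T) :
    (Finset.Icc (-⌊T⌋) ⌊T⌋).card = 2 * ⌊T⌋₊ + 1 := by
  have floor_eq := Int.natCast_floor_eq_floor hT
  rw [Int.card_Icc]
  omega

variable [IsStrictOrderedRing R]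

theorem mem_Icc_neg_floor_floor {T : R} {n : ℤ} :
    n ∈ Finset.Icc (-⌊T⌋) ⌊T⌋ ↔ |(n : R)| ≤ T := by
  rw [Finset.mem_Icc, ← abs_le, Int.le_floor, Int.cast_abs]

/-- The integer points of the cube `[-T, T]^ι` lying on the coordinate hyperplane `x_i = 0`. -/
def intBoxSlice {ι : Type*} (T : R) (i : ι) : Set (ι → ℤ) :=
  {p | p i = 0 ∧ ∀ k, |(p k : R)| ≤ T}

theorem intBoxSlice_eq_piFinset_update {ι : Type*} [Fintype ι] [DecidableEq ι] {T : R}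
    (hT : 0 ≤ T) (i : ι) :
    intBoxSlice T i =
      Fintype.piFinset (Function.update (fun _ => Finset.Icc (-⌊T⌋) ⌊T⌋) i {0}) := by
  ext p
  simp only [intBoxSlice, Set.mem_ofPred_eq, Finset.mem_coe, Fintype.mem_piFinset,
    Function.forall_update_iff _ (fun k s => p k ∈ s), Finset.mem_singleton,
    mem_Icc_neg_floor_floor]
  refine and_congr_right fun hp => ⟨fun h k _ => h k, fun h k => ?_⟩
  obtain rfl | hk := eq_or_ne k i
  · simpa only [hp, Int.cast_zero, abs_zero] using hT
  · exact h k hk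

theorem ncard_intBoxSlice {ι : Type*} [Fintype ι] {T : R} (hT : 0 ≤ T) (i : ι) :
    (intBoxSlice T i).ncard = (2 * ⌊T⌋₊ + 1) ^ (Fintype.card ι - 1) := by
  classical
  rw [intBoxSlice_eq_piFinset_update hT, Set.ncard_coe_finset, Fintype.card_piFinset,
    ← Finset.mul_prod_erase _ _ (Finset.mem_univ i), Function.update_self, Finset.card_singleton,
    one_mul, Finset.prod_eq_pow_card (b := 2 * ⌊T⌋₊ + 1),
    Finset.card_erase_of_mem (Finset.mem_univ i), Finset.card_univ]
  intro k hk
  rw [Function.update_of_ne (Finset.ne_of_mem_erase hk), card_Icc_neg_floor_floor hT]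

end IntegerBox

/-- The point `(p, 0)` of `ℝ^ι × ℝ^κ` with `p ∈ ℤ^ι`. For `ι = Fin M` and `κ = Fin N` this is
`A_L (p, 0)`, whatever the matrix `L`. -/
def horizontalPoint {ι : Type*} (κ : Type*) (p : ι → ℤ) : ι ⊕ κ → ℝ :=
  Sum.elim (fun k => (p k : ℝ)) 0

theorem horizontalPoint_injective {ι κ : Type*} :
    Function.Injective (horizontalPoint κ : (ι → ℤ) → ι ⊕ κ → ℝ) :=
  fun _ _ h => funext fun k => Int.cast_injective (congrFun h (Sum.inl k))

section Lattice

variable {M N : ℕ} {L : Matrix (Fin M) (Fin N) ℝ}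

theorem horizontalPoint_mem_latticeL (p : Fin M → ℤ) :
    horizontalPoint (Fin N) p ∈ latticeL M N L :=
  ⟨p, 0, by simp [horizontalPoint], by simp [horizontalPoint]⟩

variable {i : Fin M}

theorem exists_horizontalPoint_eq_of_mem_latticeL
    (hL : LinearIndependent ℚ (Fin.cons 1 (L i) : Fin (N + 1) → ℝ)) {v : Fin M ⊕ Fin N → ℝ}
    (hv : v ∈ latticeL M N L) (hvi : v (Sum.inl i) = 0) :
    ∃ p : Fin M → ℤ, p i = 0 ∧ horizontalPoint (Fin N) p = v := by
  obtain ⟨p, q, hp, hq⟩ := hv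
  obtain ⟨rfl, hpi⟩ :=
    eq_zero_of_sum_mul_intCast_add_intCast_eq_zero (hL.restrict_scalars' ℤ) ((hp i).symm.trans hvi)
  refine ⟨p, hpi, funext ?_⟩
  rintro (k | j)
  · simp [horizontalPoint, hp]
  · simp [horizontalPoint, hq]

theorem horizontalPoint_mem_setZi {ε T : ℝ} {Q : Fin N → ℝ} (hε : 0 < ε) (hQ : ∀ j, 0 ≤ Q j)
    {p : Fin M → ℤ} (hp : p ∈ intBoxSlice T i) :
    horizontalPoint (Fin N) p ∈ setZi M N ε T Q i := by
  obtain ⟨hpi, hpT⟩ := hp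
  have prod_eq_zero : ∏ k, |horizontalPoint (Fin N) p (Sum.inl k)| = 0 :=
    Finset.prod_eq_zero (Finset.mem_univ i) (by simp [horizontalPoint, hpi])
  exact ⟨prod_eq_zero.trans_lt hε, hpT, by simp [horizontalPoint, hpi],
    by simpa [horizontalPoint] using hQ⟩

theorem latticeL_inter_setZi_eq_image
    (hL : LinearIndependent ℚ (Fin.cons 1 (L i) : Fin (N + 1) → ℝ)) {ε T : ℝ} {Q : Fin N → ℝ}
    (hε : 0 < ε) (hQ : ∀ j, 0 ≤ Q j) :
    latticeL M N L ∩ setZi M N ε T Q i = horizontalPoint (Fin N) '' intBoxSlice T i := by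
  apply Set.Subset.antisymm
  · rintro v ⟨hv, -, hvT, hvi, -⟩
    obtain ⟨p, hpi, rfl⟩ := exists_horizontalPoint_eq_of_mem_latticeL hL hv hvi
    exact ⟨p, ⟨hpi, hvT⟩, rfl⟩
  · rintro _ ⟨p, hp, rfl⟩
    exact ⟨horizontalPoint_mem_latticeL p, horizontalPoint_mem_setZi hε hQ hp⟩

theorem stmt5_general (hL : LinearIndependent ℚ (Fin.cons 1 (L i) : Fin (N + 1) → ℝ))
    {ε T : ℝ} {Q : Fin N → ℝ} (hε : 0 < ε) (hT : 0 ≤ T) (hQ : ∀ j, 0 ≤ Q j) :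
    (latticeL M N L ∩ setZi M N ε T Q i).ncard = (2 * ⌊T⌋₊ + 1) ^ (M - 1) := by
  rw [latticeL_inter_setZi_eq_image hL hε hQ, Set.ncard_image_of_injective _
    horizontalPoint_injective, ncard_intBoxSlice hT, Fintype.card_fin]

end Lattice

theorem stmt5 (M : ℕ) (hM : 0 < M) :
    ∃ c₀ : ℝ, 0 < c₀ ∧
      ∀ N : ℕ, 0 < N →
      ∀ L : Matrix (Fin M) (Fin N) ℝ, rowUnitIndep M N L →
      ∀ ε T : ℝ, 0 < ε → 0 < T →
      ∀ Q : Fin N → ℝ, (∀ j, 1 ≤ Q j) →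
      ∀ i : Fin M,
        (Set.ncard (latticeL M N L ∩ setZi M N ε T Q i) : ℝ) ≤ c₀ * (1 + T) ^ M := by
  refine ⟨2 ^ M, by positivity, fun N _ L hL ε T hε hT Q hQ i => ?_⟩
  rw [stmt5_general (hL i) hε hT.le fun j => zero_le_one.trans (hQ j)]
  exact_mod_cast two_mul_natFloor_add_one_pow_le hT.le (Nat.sub_le M 1)
end

section
/- Let M, N be positive integers, let φ : [0,∞) → (0,1] be non-increasing, and let L ∈ ℝ^{M×N} be φ-multiplicatively badly approximable. Let ε, T > 0 and Q ∈ [1,∞)^N with Q := (Q_1⋯Q_N)^{1/N}, and assume ε Q^N / φ(Q) < 1. Then Λ_L ∩ Z ⊆ C, i.e. every lattice point of Λ_L lying in Z has its last N coordinates equal to zero. -/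
/-- Distance from a real number to the nearest integer. -/
noncomputable def distNearestInt (x : ℝ) : ℝ := |x - round x|

/-- The geometric mean `(Q₁ ⋯ Q_N)^(1/N)`. -/
noncomputable def geomMean (N : ℕ) (Q : Fin N → ℝ) : ℝ := (∏ j, Q j) ^ ((1 : ℝ) / (N : ℝ))

/-- `L` is `φ`-multiplicatively badly approximable. -/
def multBadlyApprox (M N : ℕ) (φ : ℝ → ℝ) (L : Matrix (Fin M) (Fin N) ℝ) : Prop :=
  ∀ q : Fin N → ℤ, q ≠ 0 →
    φ ((∏ j, max 1 |(q j : ℝ)|) ^ ((1 : ℝ) / (N : ℝ))) ≤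
      (∏ j, max 1 |(q j : ℝ)|) * ∏ i, distNearestInt (∑ j, L i j * (q j : ℝ))

/-- The set `Z = H × ∏ [-Q_j, Q_j]`. -/
def setZ (M N : ℕ) (ε T : ℝ) (Q : Fin N → ℝ) : Set (Fin M ⊕ Fin N → ℝ) :=
  {v | (∏ i, |v (Sum.inl i)|) < ε ∧ (∀ i, |v (Sum.inl i)| ≤ T) ∧ ∀ j, |v (Sum.inr j)| ≤ Q j}

/-- The set `C = {(x, y) : y = 0}`. -/
def setC (M N : ℕ) : Set (Fin M ⊕ Fin N → ℝ) := {v | ∀ j : Fin N, v (Sum.inr j) = 0}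

/-!
A point `(x, y)` of `Λ_L` with `y ≠ 0` has `y = q` for a nonzero integer vector `q` and
`|x_i| ≥ ‖L_i q‖`. If also `|q_j| ≤ Q_j`, bad approximability of `L` at `q` and monotonicity of
`φ` give `φ(Q) ≤ Q^N ∏ |x_i|`. The hypothesis `ε Q^N < φ(Q)` therefore forces `∏ |x_i| > ε`, so
the point lies outside `Z`.
-/

theorem distNearestInt_nonneg (x : ℝ) : 0 ≤ distNearestInt x :=
  abs_nonneg _

theorem distNearestInt_le_abs_add_intCast (x : ℝ) (n : ℤ) : distNearestInt x ≤ |x + n| := by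
  simpa only [distNearestInt, Int.cast_neg, sub_neg_eq_add] using round_le x (-n)

section GeomMean

variable {N : ℕ} {P Q : Fin N → ℝ}

theorem geomMean_nonneg (hQ : ∀ j, 0 ≤ Q j) : 0 ≤ geomMean N Q :=
  Real.rpow_nonneg (Finset.prod_nonneg fun j _ ↦ hQ j) _

theorem geomMean_pow (hQ : ∀ j, 0 ≤ Q j) : geomMean N Q ^ N = ∏ j, Q j := by
  obtain rfl | hN := eq_or_ne N 0
  · rw [pow_zero, Fin.prod_univ_zero]
  · rw [geomMean, one_div]
    exact Real.rpow_inv_natCast_pow (Finset.prod_nonneg fun j _ ↦ hQ j) hN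

theorem geomMean_le_geomMean (hP : ∀ j, 0 ≤ P j) (hPQ : ∀ j, P j ≤ Q j) :
    geomMean N P ≤ geomMean N Q :=
  Real.rpow_le_rpow (Finset.prod_nonneg fun j _ ↦ hP j)
    (Finset.prod_le_prod (fun j _ ↦ hP j) fun j _ ↦ hPQ j) (by positivity)

end GeomMean

namespace multBadlyApprox

variable {M N : ℕ} {φ : ℝ → ℝ} {L : Matrix (Fin M) (Fin N) ℝ} {Q : Fin N → ℝ}

theorem le_geomMean_pow_mul_prod_abs (hL : multBadlyApprox M N φ L)
    (hφ : AntitoneOn φ (Set.Ici 0)) {q : Fin N → ℤ} (hq : q ≠ 0)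
    (hqQ : ∀ j, max 1 |(q j : ℝ)| ≤ Q j) (p : Fin M → ℤ) :
    φ (geomMean N Q) ≤ geomMean N Q ^ N * ∏ i, |(∑ j, L i j * (q j : ℝ)) + p i| := by
  set m : Fin N → ℝ := fun j ↦ max 1 |(q j : ℝ)|
  have hm : ∀ j, 0 ≤ m j := fun j ↦ zero_le_one.trans (le_max_left _ _)
  have hG : 0 ≤ geomMean N m := geomMean_nonneg hm
  have hGQ : geomMean N m ≤ geomMean N Q := geomMean_le_geomMean hm hqQ
  calc φ (geomMean N Q)
    _ ≤ φ (geomMean N m) := hφ hG (hG.trans hGQ) hGQ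
    _ ≤ (∏ j, m j) * ∏ i, distNearestInt (∑ j, L i j * (q j : ℝ)) := hL q hq
    _ = geomMean N m ^ N * ∏ i, distNearestInt (∑ j, L i j * (q j : ℝ)) := by
      rw [geomMean_pow hm]
    _ ≤ geomMean N Q ^ N * ∏ i, |(∑ j, L i j * (q j : ℝ)) + p i| := by
      gcongr with i
      · exact Finset.prod_nonneg fun i _ ↦ distNearestInt_nonneg _
      · exact pow_nonneg (hG.trans hGQ) N
      · exact fun i _ ↦ distNearestInt_nonneg _
      · exact distNearestInt_le_abs_add_intCast _ _

theorem le_geomMean_pow_mul_prod_abs_of_mem_latticeL (hL : multBadlyApprox M N φ L)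
    (hφ : AntitoneOn φ (Set.Ici 0)) (hQ : ∀ j, 1 ≤ Q j) {v : Fin M ⊕ Fin N → ℝ}
    (hv : v ∈ latticeL M N L) (hvC : v ∉ setC M N) (hvQ : ∀ j, |v (Sum.inr j)| ≤ Q j) :
    φ (geomMean N Q) ≤ geomMean N Q ^ N * ∏ i, |v (Sum.inl i)| := by
  obtain ⟨p, q, hp, hq⟩ := hv
  have hq₀ : q ≠ 0 := by
    rintro rfl
    exact hvC fun j ↦ by rw [hq, Pi.zero_apply, Int.cast_zero]
  simp only [hq] at hvQ
  simp only [hp]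
  exact hL.le_geomMean_pow_mul_prod_abs hφ hq₀ (fun j ↦ max_le (hQ j) (hvQ j)) p

end multBadlyApprox

theorem stmt6 (M N : ℕ) (hM : 0 < M) (hN : 0 < N)
    (φ : ℝ → ℝ) (hφanti : AntitoneOn φ (Set.Ici 0))
    (hφmem : ∀ x : ℝ, 0 ≤ x → φ x ∈ Set.Ioc (0 : ℝ) 1)
    (L : Matrix (Fin M) (Fin N) ℝ) (hbad : multBadlyApprox M N φ L)
    (Q : Fin N → ℝ) (hQ : ∀ j, 1 ≤ Q j) (ε T : ℝ) (hε : 0 < ε) (hT : 0 < T)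
    (hsmall : ε * geomMean N Q ^ N / φ (geomMean N Q) < 1) :
    latticeL M N L ∩ setZ M N ε T Q ⊆ setC M N := by
  rintro v ⟨hvL, hvε, -, hvQ⟩
  by_contra hvC
  have hG : 0 ≤ geomMean N Q := geomMean_nonneg fun j ↦ zero_le_one.trans (hQ j)
  have hφG : ε * geomMean N Q ^ N < φ (geomMean N Q) :=
    (div_lt_one (hφmem _ hG).1).1 hsmall
  refine hφG.not_ge ?_
  calc φ (geomMean N Q)
    _ ≤ geomMean N Q ^ N * ∏ i, |v (Sum.inl i)| :=
      hbad.le_geomMean_pow_mul_prod_abs_of_mem_latticeL hφanti hQ hvL hvC hvQ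
    _ ≤ geomMean N Q ^ N * ε := by gcongr
    _ = ε * geomMean N Q ^ N := mul_comm _ _
end

section
/- Let M, N be positive integers and let t = (t_{sj}) be an (M+N−1)×N matrix with entries in {0,1} satisfying: t_{s1} = 1 for all s; t_{sj} ≤ t_{(s+1)j} for all s < M+N−1 and all j; if t_{sj} = 1 then t_{sj'} = 1 for all j' ≤ j; and t_{sj} = 1 whenever M ≤ s ≤ M+N−1 and j ≤ s+1−M. For each s let h_s := max{j : t_{sj} = 1}. Define k_s := M + h_s for s = 1,…,M, and recursively k_s := (M + h_s)·(1 − Σ_{r=1}^{s−1} (1 − t_{r(s+1−M)})/k_r)^{−1} for s = M+1,…,M+N−1. Set α_s := Σ_{r=1}^{s} 1/k_r and α_{sj} := Σ_{r=1}^{s} t_{rj}/k_r. Then: the recursion is well defined, i.e. 1 − Σ_{r=1}^{s−1} (1 − t_{r(s+1−M)})/k_r > 0 for every s = M+1,…,M+N−1; (i) k_s ≥ M + h_s for all s = 1,…,M+N−1; and (ii) for all s = M,…,M+N−1, (s+1)·α_s + Σ_{j=s+2−M}^{N} α_{sj} = s (the sum being empty if s+1−M = N), and consequently α_s ≤ s/(s+1).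 -/
/-!
Write `w r = 1 / k r` and follow `Φ s = (s + 1) α_s + ∑_{j > s + 1 - M} α_{sj}`. Since row `s`
starts with `s + 1 - M` ones, `M + h s = s + 1 + ∑_{j > s + 1 - M} t_{sj}`, so passing from `s - 1`
to `s` adds `w s * (M + h s)` to `Φ` for the new row, and `∑_{r < s} (1 - t_{r, s + 1 - M}) w r`
because the column `s + 1 - M` leaves the second sum while the coefficient of `α` grows by one.
The recursion says exactly that these two contributions add up to `1`, hence `Φ s = s`. In
particular `α_{s - 1} ≤ (s - 1) / s < 1`, which keeps the next denominator positive.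
-/

open Finset

section RowSums

variable {R : Type*} [NonAssocSemiring R] {f : ℕ → R} {n N : ℕ}

theorem sum_Icc_one_eq_natCast_add (hn : n ≤ N) (hf : ∀ j, 1 ≤ j → j ≤ n → f j = 1) :
    ∑ j ∈ Icc 1 N, f j = n + ∑ j ∈ Icc (n + 1) N, f j := by
  have hones : ∑ j ∈ Ioc 0 n, f j = n := by
    rw [sum_congr rfl fun j hj => hf j (mem_Ioc.1 hj).1 (mem_Ioc.1 hj).2]
    simp
  rw [show Icc 1 N = Ioc 0 N from Icc_add_one_left_eq_Ioc 0 N, Icc_add_one_left_eq_Ioc,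
    ← sum_Ioc_consecutive f n.zero_le hn, hones]

theorem sum_Icc_one_eq_natCast (hn : n ≤ N) (h01 : ∀ j, 1 ≤ j → j ≤ N → f j = 0 ∨ f j = 1)
    (hone : ∀ j, 1 ≤ j → j ≤ n → f j = 1) (hne : ∀ j, n < j → j ≤ N → f j ≠ 1) :
    ∑ j ∈ Icc 1 N, f j = n := by
  have htail : ∑ j ∈ Icc (n + 1) N, f j = 0 := sum_eq_zero fun j hj => by
    obtain ⟨hnj, hjN⟩ := mem_Icc.1 hj
    exact (h01 j (by lia) hjN).resolve_right (hne j hnj hjN)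
  rw [sum_Icc_one_eq_natCast_add hn hone, htail, add_zero]

end RowSums

/-- The invariant `(s + 1) α_s + ∑_{j > s + 1 - M} α_{sj}` of the recursion, for weights
`w r = 1 / k r`. The row is written `s = M + i`, which avoids truncated subtraction. -/
def staircaseSum {R : Type*} [Semiring R] (M N : ℕ) (t : ℕ → ℕ → R) (w : ℕ → R) (i : ℕ) : R :=
  (M + i + 1) * ∑ r ∈ Icc 1 (M + i), w r +
    ∑ j ∈ Icc (i + 2) N, ∑ r ∈ Icc 1 (M + i), t r j * w r

/-- The weights `w r = 1 / k r` of the recursion attached to a matrix `t` with rows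
`1, …, M + N - 1` and columns `1, …, N`, the row sums playing the role of `h`. The recursion is
cleared of denominators, and its rows beyond the first `M` are written `M + i + 1`. -/
structure IsStaircaseWeight {R : Type*} [Ring R] (M N : ℕ) (t : ℕ → ℕ → R) (w : ℕ → R) : Prop where
  apply_one : ∀ r, 1 ≤ r → r ≤ M → t r 1 = 1
  apply_of_le : ∀ i j, i + 1 < N → 1 ≤ j → j ≤ i + 2 → t (M + i + 1) j = 1
  mul_eq_one : ∀ r, 1 ≤ r → r ≤ M → w r * (M + ∑ j ∈ Icc 1 N, t r j) = 1
  mul_eq_one_sub : ∀ i, i + 1 < N → w (M + i + 1) * (M + ∑ j ∈ Icc 1 N, t (M + i + 1) j) =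
    1 - ∑ r ∈ Icc 1 (M + i), (1 - t r (i + 2)) * w r

namespace IsStaircaseWeight

section Invariant

variable {R : Type*} [CommRing R] {M N : ℕ} {t : ℕ → ℕ → R} {w : ℕ → R}

theorem staircaseSum_zero (hw : IsStaircaseWeight M N t w) (hN : 0 < N) :
    staircaseSum M N t w 0 = M := by
  have hrow : ∀ r ∈ Icc 1 M, (M + 1) * w r + ∑ j ∈ Icc 2 N, t r j * w r = 1 := fun r hr => by
    obtain ⟨h1, hM⟩ := mem_Icc.1 hr
    have hsum : ∑ j ∈ Icc 1 N, t r j = 1 + ∑ j ∈ Icc 2 N, t r j := by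
      simpa using sum_Icc_one_eq_natCast_add (f := t r) hN fun j hj hj' => by
        rw [le_antisymm hj' hj, hw.apply_one r h1 hM]
    rw [← sum_mul]
    linear_combination hw.mul_eq_one r h1 hM - w r * hsum
  calc staircaseSum M N t w 0
      = ∑ r ∈ Icc 1 M, ((M + 1) * w r + ∑ j ∈ Icc 2 N, t r j * w r) := by
        simp only [staircaseSum, Nat.cast_zero, add_zero, zero_add]
        rw [sum_comm, mul_sum, sum_add_distrib]
    _ = M := by rw [sum_congr rfl hrow]; simp

theorem staircaseSum_succ (hw : IsStaircaseWeight M N t w) {i : ℕ} (hi : i + 1 < N) :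
    staircaseSum M N t w (i + 1) = staircaseSum M N t w i + 1 := by
  have hrow : w (M + i + 1) * (M + i + 2 + ∑ j ∈ Icc (i + 3) N, t (M + i + 1) j) =
      1 - ∑ r ∈ Icc 1 (M + i), (1 - t r (i + 2)) * w r := by
    rw [← hw.mul_eq_one_sub i hi,
      sum_Icc_one_eq_natCast_add (f := t (M + i + 1)) hi fun j => hw.apply_of_le i j hi]
    push_cast
    ring
  have hdeficit : ∑ r ∈ Icc 1 (M + i), (1 - t r (i + 2)) * w r =
      ∑ r ∈ Icc 1 (M + i), w r - ∑ r ∈ Icc 1 (M + i), t r (i + 2) * w r := by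
    simp only [sub_mul, one_mul, sum_sub_distrib]
  have hcolumn : ∑ j ∈ Icc (i + 2) N, ∑ r ∈ Icc 1 (M + i), t r j * w r =
      ∑ r ∈ Icc 1 (M + i), t r (i + 2) * w r +
        ∑ j ∈ Icc (i + 3) N, ∑ r ∈ Icc 1 (M + i), t r j * w r := by
    rw [← add_sum_Ioc_eq_sum_Icc hi, ← Icc_add_one_left_eq_Ioc, add_assoc i 2 1]
  have hlast (f : ℕ → R) :
      ∑ r ∈ Icc 1 (M + i + 1), f r = ∑ r ∈ Icc 1 (M + i), f r + f (M + i + 1) :=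
    sum_Icc_succ_top (by lia) f
  simp only [staircaseSum, ← add_assoc M i 1, show i + 1 + 2 = i + 3 from rfl, hlast,
    sum_add_distrib, ← sum_mul, hcolumn]
  push_cast
  linear_combination hrow - hdeficit

theorem staircaseSum_eq (hw : IsStaircaseWeight M N t w) {i : ℕ} (hi : i < N) :
    staircaseSum M N t w i = M + i := by
  induction i with
  | zero => simpa using hw.staircaseSum_zero hi
  | succ i ih =>
    rw [hw.staircaseSum_succ hi, ih (by lia)]
    push_cast
    ring

end Invariant

section Positivity

variable {𝕜 : Type*} [Field 𝕜] [LinearOrder 𝕜] [IsStrictOrderedRing 𝕜]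
  {M N : ℕ} {t : ℕ → ℕ → 𝕜} {w : ℕ → 𝕜}

theorem sum_le_div (hw : IsStaircaseWeight M N t w) {i : ℕ} (hi : i < N)
    (ht : ∀ r j, 1 ≤ r → r < M + N → 1 ≤ j → j ≤ N → 0 ≤ t r j)
    (hnonneg : ∀ r, 1 ≤ r → r ≤ M + i → 0 ≤ w r) :
    ∑ r ∈ Icc 1 (M + i), w r ≤ (M + i) / (M + i + 1) := by
  have htail : 0 ≤ ∑ j ∈ Icc (i + 2) N, ∑ r ∈ Icc 1 (M + i), t r j * w r :=
    sum_nonneg fun j hj => sum_nonneg fun r hr => by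
      obtain ⟨hj2, hjN⟩ := mem_Icc.1 hj
      obtain ⟨hr1, hri⟩ := mem_Icc.1 hr
      exact mul_nonneg (ht r j hr1 (by lia) (by lia) hjN) (hnonneg r hr1 hri)
  have hinv := hw.staircaseSum_eq hi
  rw [staircaseSum] at hinv
  rw [le_div_iff₀ (by positivity)]
  linarith

theorem sum_one_sub_mul_lt_one (hw : IsStaircaseWeight M N t w) {i : ℕ} (hi : i + 1 < N)
    (ht : ∀ r j, 1 ≤ r → r < M + N → 1 ≤ j → j ≤ N → 0 ≤ t r j)
    (hnonneg : ∀ r, 1 ≤ r → r ≤ M + i → 0 ≤ w r) :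
    ∑ r ∈ Icc 1 (M + i), (1 - t r (i + 2)) * w r < 1 :=
  calc ∑ r ∈ Icc 1 (M + i), (1 - t r (i + 2)) * w r
      ≤ ∑ r ∈ Icc 1 (M + i), w r := sum_le_sum fun r hr => by
        obtain ⟨hr1, hri⟩ := mem_Icc.1 hr
        exact mul_le_of_le_one_left (hnonneg r hr1 hri)
          (sub_le_self 1 (ht r (i + 2) hr1 (by lia) (by lia) hi))
    _ ≤ (M + i) / (M + i + 1) := hw.sum_le_div (by lia) ht hnonneg
    _ < 1 := (div_lt_one (by positivity)).2 (lt_add_one _)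

theorem pos (hw : IsStaircaseWeight M N t w)
    (ht : ∀ r j, 1 ≤ r → r < M + N → 1 ≤ j → j ≤ N → 0 ≤ t r j)
    {r : ℕ} (hr : 1 ≤ r) (hrN : r < M + N) : 0 < w r := by
  induction r using Nat.strong_induction_on with
  | _ r ih =>
    have hsum : 0 ≤ (M : 𝕜) + ∑ j ∈ Icc 1 N, t r j :=
      add_nonneg M.cast_nonneg <| sum_nonneg fun j hj =>
        ht r j hr hrN (mem_Icc.1 hj).1 (mem_Icc.1 hj).2
    refine pos_of_mul_pos_left ?_ hsum
    rcases le_or_gt r M with hrM | hrM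
    · rw [hw.mul_eq_one r hr hrM]
      exact one_pos
    · obtain ⟨i, rfl⟩ := Nat.exists_eq_add_of_lt hrM
      rw [hw.mul_eq_one_sub i (by lia), sub_pos]
      exact hw.sum_one_sub_mul_lt_one (by lia) ht fun q hq hqi => (ih q (by lia) hq (by lia)).le

theorem mul_le_one (hw : IsStaircaseWeight M N t w)
    (ht : ∀ r j, 1 ≤ r → r < M + N → 1 ≤ j → j ≤ N → 0 ≤ t r j ∧ t r j ≤ 1)
    {r : ℕ} (hr : 1 ≤ r) (hrN : r < M + N) : w r * (M + ∑ j ∈ Icc 1 N, t r j) ≤ 1 := by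
  rcases le_or_gt r M with hrM | hrM
  · exact (hw.mul_eq_one r hr hrM).le
  · obtain ⟨i, rfl⟩ := Nat.exists_eq_add_of_lt hrM
    rw [hw.mul_eq_one_sub i (by lia)]
    refine sub_le_self 1 (sum_nonneg fun q hq => ?_)
    obtain ⟨hq1, hqi⟩ := mem_Icc.1 hq
    exact mul_nonneg (sub_nonneg.2 (ht q (i + 2) hq1 (by lia) (by lia) (by lia)).2)
      (hw.pos (fun a b ha ha' hb hb' => (ht a b ha ha' hb hb').1) hq1 (by lia)).le

end Positivity

end IsStaircaseWeight

theorem isStaircaseWeight_inv {K : Type*} [Field K] {M N : ℕ} {t : ℕ → ℕ → K} {h k : ℕ → K}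
    (htone : ∀ s, 1 ≤ s → s ≤ M → t s 1 = 1)
    (htdiag : ∀ s j, M ≤ s → s ≤ M + N - 1 → 1 ≤ j → j ≤ s + 1 - M → t s j = 1)
    (hh : ∀ s, 1 ≤ s → s ≤ M + N - 1 → h s = ∑ j ∈ Icc 1 N, t s j)
    (hne : ∀ s, 1 ≤ s → s ≤ M + N - 1 → (M : K) + h s ≠ 0) (hN : 0 < N)
    (hkbase : ∀ s, 1 ≤ s → s ≤ M → k s = M + h s)
    (hkrec : ∀ s, M + 1 ≤ s → s ≤ M + N - 1 →
      k s = (M + h s) * (1 - ∑ r ∈ Icc 1 (s - 1), (1 - t r (s + 1 - M)) / k r)⁻¹) :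
    IsStaircaseWeight M N t fun r => (k r)⁻¹ where
  apply_one := htone
  apply_of_le i j hi hj hji := htdiag _ j (by lia) (by lia) hj (by lia)
  mul_eq_one r hr hrM := by
    rw [← hh r hr (by lia), hkbase r hr hrM, inv_mul_cancel₀ (hne r hr (by lia))]
  mul_eq_one_sub i hi := by
    have hrec := hkrec (M + i + 1) (by lia) (by lia)
    rw [show M + i + 1 - 1 = M + i by lia, show M + i + 1 + 1 - M = i + 2 by lia] at hrec
    rw [← hh _ (by lia) (by lia), hrec, mul_inv_rev, inv_inv,
      inv_mul_cancel_right₀ (hne _ (by lia) (by lia))]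
    simp only [div_eq_mul_inv]

theorem stmt15_general {𝕜 : Type*} [Field 𝕜] [LinearOrder 𝕜] [IsStrictOrderedRing 𝕜] {M N : ℕ}
    (hN : 0 < N) (t : ℕ → ℕ → 𝕜) (h k : ℕ → 𝕜)
    (ht : ∀ s j, 1 ≤ s → s ≤ M + N - 1 → 1 ≤ j → j ≤ N → 0 ≤ t s j ∧ t s j ≤ 1)
    (htone : ∀ s, 1 ≤ s → s ≤ M + N - 1 → t s 1 = 1)
    (htdiag : ∀ s j, M ≤ s → s ≤ M + N - 1 → 1 ≤ j → j ≤ s + 1 - M → t s j = 1)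
    (hh : ∀ s, 1 ≤ s → s ≤ M + N - 1 → h s = ∑ j ∈ Icc 1 N, t s j)
    (hkbase : ∀ s, 1 ≤ s → s ≤ M → k s = M + h s)
    (hkrec : ∀ s, M + 1 ≤ s → s ≤ M + N - 1 →
      k s = (M + h s) * (1 - ∑ r ∈ Icc 1 (s - 1), (1 - t r (s + 1 - M)) / k r)⁻¹) :
    (∀ s, M + 1 ≤ s → s ≤ M + N - 1 →
      0 < 1 - ∑ r ∈ Icc 1 (s - 1), (1 - t r (s + 1 - M)) / k r) ∧
    (∀ s, 1 ≤ s → s ≤ M + N - 1 → M + h s ≤ k s) ∧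
    (∀ s, M ≤ s → s ≤ M + N - 1 →
      ((s : 𝕜) + 1) * ∑ r ∈ Icc 1 s, (k r)⁻¹ +
          ∑ j ∈ Icc (s + 2 - M) N, ∑ r ∈ Icc 1 s, t r j / k r = s ∧
      ∑ r ∈ Icc 1 s, (k r)⁻¹ ≤ (s : 𝕜) / (s + 1)) := by
  have ht' : ∀ r j, 1 ≤ r → r < M + N → 1 ≤ j → j ≤ N → 0 ≤ t r j ∧ t r j ≤ 1 :=
    fun r j hr hrN => ht r j hr (by lia)
  have ht0 r j hr hrN hj hjN := (ht' r j hr hrN hj hjN).1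
  have hne : ∀ s, 1 ≤ s → s ≤ M + N - 1 → (M : 𝕜) + h s ≠ 0 := fun s hs hsN => by
    have hone_le : 1 ≤ h s := by
      rw [hh s hs hsN, ← htone s hs hsN]
      exact single_le_sum (fun j hj => (ht s j hs hsN (mem_Icc.1 hj).1 (mem_Icc.1 hj).2).1)
        (mem_Icc.2 ⟨le_rfl, hN⟩)
    positivity
  have hw := isStaircaseWeight_inv (fun s hs hsM => htone s hs (by lia)) htdiag hh hne hN
    hkbase hkrec
  have hpos : ∀ r, 1 ≤ r → r < M + N → 0 < (k r)⁻¹ := fun r => hw.pos ht0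
  refine ⟨fun s hs hsN => ?_, fun s hs hsN => ?_, fun s hs hsN => ?_⟩
  · obtain ⟨i, rfl⟩ := Nat.exists_eq_add_of_lt hs
    rw [show M + i + 1 - 1 = M + i by lia, show M + i + 1 + 1 - M = i + 2 by lia, sub_pos]
    simpa only [div_eq_mul_inv] using
      hw.sum_one_sub_mul_lt_one (by lia) ht0 fun r hr hri => (hpos r hr (by lia)).le
  · rw [hh s hs hsN, ← inv_mul_le_one₀ (inv_pos.1 (hpos s hs (by lia)))]
    exact hw.mul_le_one ht' hs (by lia)
  · obtain ⟨i, rfl⟩ := Nat.exists_eq_add_of_le hs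
    rw [show M + i + 2 - M = i + 2 by lia, Nat.cast_add]
    simp only [div_eq_mul_inv (t _ _)]
    exact ⟨hw.staircaseSum_eq (by lia),
      hw.sum_le_div (by lia) ht0 fun r hr hri => (hpos r hr (by lia)).le⟩

theorem stmt15 (M N : ℕ) (hM : 0 < M) (hN : 0 < N)
    -- `t` is the (M+N-1) × N matrix of zeros and ones (rows `s ∈ {1,…,M+N-1}`,
    -- columns `j ∈ {1,…,N}`), `h s` is the largest `j` with `t s j = 1`,
    -- and `k` is the associated sequence of weight sums
    (t : ℕ → ℕ → ℝ) (h : ℕ → ℕ) (k : ℕ → ℝ)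
    (ht01 : ∀ s j, 1 ≤ s → s ≤ M + N - 1 → 1 ≤ j → j ≤ N → t s j = 0 ∨ t s j = 1)
    (htone : ∀ s, 1 ≤ s → s ≤ M + N - 1 → t s 1 = 1)
    (htmono : ∀ s j, 1 ≤ s → s + 1 ≤ M + N - 1 → 1 ≤ j → j ≤ N → t s j ≤ t (s + 1) j)
    (htdown : ∀ s j j', 1 ≤ s → s ≤ M + N - 1 → 1 ≤ j' → j' ≤ j → j ≤ N →
      t s j = 1 → t s j' = 1)
    (htdiag : ∀ s j, M ≤ s → s ≤ M + N - 1 → 1 ≤ j → j ≤ s + 1 - M → t s j = 1)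
    (hh : ∀ s, 1 ≤ s → s ≤ M + N - 1 →
      1 ≤ h s ∧ h s ≤ N ∧ t s (h s) = 1 ∧ ∀ j, h s < j → j ≤ N → t s j ≠ 1)
    -- `k s = M + h s` for `s = 1, …, M`
    (hkbase : ∀ s, 1 ≤ s → s ≤ M → k s = (M : ℝ) + (h s : ℝ))
    -- recursion defining `k s` for `s = M+1, …, M+N-1`
    (hkrec : ∀ s, M + 1 ≤ s → s ≤ M + N - 1 →
      k s = ((M : ℝ) + (h s : ℝ)) *
        (1 - ∑ r ∈ Finset.Icc 1 (s - 1), (1 - t r (s + 1 - M)) / k r)⁻¹) :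
    -- the recursion is well defined
    (∀ s, M + 1 ≤ s → s ≤ M + N - 1 →
      0 < 1 - ∑ r ∈ Finset.Icc 1 (s - 1), (1 - t r (s + 1 - M)) / k r) ∧
    -- (i) `k s ≥ M + h s`
    (∀ s, 1 ≤ s → s ≤ M + N - 1 → (M : ℝ) + (h s : ℝ) ≤ k s) ∧
    -- (ii) `(s+1) α_s + ∑_{j > s+1-M} α_{sj} = s`, hence `α_s ≤ s/(s+1)`
    (∀ s, M ≤ s → s ≤ M + N - 1 →
      (((s : ℝ) + 1) * (∑ r ∈ Finset.Icc 1 s, (k r)⁻¹) +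
          ∑ j ∈ Finset.Icc (s + 2 - M) N, ∑ r ∈ Finset.Icc 1 s, t r j / k r = (s : ℝ)) ∧
      (∑ r ∈ Finset.Icc 1 s, (k r)⁻¹) ≤ (s : ℝ) / ((s : ℝ) + 1)) := by
  have hentry : ∀ s j, 1 ≤ s → s ≤ M + N - 1 → 1 ≤ j → j ≤ N → 0 ≤ t s j ∧ t s j ≤ 1 := by
    intro s j hs hsN hj hjN
    rcases ht01 s j hs hsN hj hjN with hzero | hone
    · simp [hzero]
    · simp [hone]
  have hrow : ∀ s, 1 ≤ s → s ≤ M + N - 1 → (h s : ℝ) = ∑ j ∈ Icc 1 N, t s j := by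
    intro s hs hsN
    obtain ⟨-, hle, hone, hne⟩ := hh s hs hsN
    exact (sum_Icc_one_eq_natCast hle (fun j => ht01 s j hs hsN)
      (fun j hj hjh => htdown s (h s) j hs hsN hj hjh hle hone) hne).symm
  exact stmt15_general hN t (fun s => h s) k hentry htone htdiag hrow hkbase hkrec
end
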